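/- Let U ⊆ ℂ be open and let t, h, p : U → ℂ be smooth functions satisfying the integrability equations (i) t_z̄ = t̄·h, (ii) p_z̄ = 2h·h̄_z − i(|h|²)_z, and (iii) p̄·h − p·h̄ = h_z̄z̄ − h̄_zz. Let w : U → ℂ be holomorphic and satisfy Re(w)·Im(h) = Im(w)·Re(h) at every point of U. Then the functions t, h, p − w also satisfy equations (i), (ii), (iii). -/

import Mathlib

open Complex

/-- The Wirtinger derivative `u_z = ½(u_x − i·u_y)` of `u : ℂ → ℂ`, where
`u_x = fderiv ℝ u z 1` and `u_y = fderiv ℝ u z i`. -/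
noncomputable def wz (u : ℂ → ℂ) (z : ℂ) : ℂ :=
  (fderiv ℝ u z 1 - Complex.I * fderiv ℝ u z Complex.I) / 2

/-- The Wirtinger derivative `u_z̄ = ½(u_x + i·u_y)` of `u : ℂ → ℂ`. -/
noncomputable def wzbar (u : ℂ → ℂ) (z : ℂ) : ℂ :=
  (fderiv ℝ u z 1 + Complex.I * fderiv ℝ u z Complex.I) / 2

/-- The integrability equations (INTEQ) for the invariant functions `t, h, p` on `U`:
(i) `t_z̄ = t̄·h`, (ii) `p_z̄ = 2h·h̄_z − i(|h|²)_z`, (iii) `p̄·h − p·h̄ = h_z̄z̄ − h̄_zz`. -/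
def INTEQ (U : Set ℂ) (t h p : ℂ → ℂ) : Prop :=
  (∀ z ∈ U, wzbar t z = (starRingEnd ℂ) (t z) * h z) ∧
  (∀ z ∈ U, wzbar p z =
      2 * h z * wz (fun w => (starRingEnd ℂ) (h w)) z -
        Complex.I * wz (fun w => ((Complex.normSq (h w) : ℝ) : ℂ)) z) ∧
  (∀ z ∈ U, (starRingEnd ℂ) (p z) * h z - p z * (starRingEnd ℂ) (h z) =
      wzbar (wzbar h) z - wz (wz (fun w => (starRingEnd ℂ) (h w))) z)

/-! The function `p` enters (ii) and (iii) only through the real-linear expressions `p_z̄` and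
`p̄·h − p·h̄`, and (i) not at all. Hence subtracting `w` preserves the equations as soon as
both expressions vanish at `w`: the first by the Cauchy–Riemann equations, the second because
`w̄·h` is real when `w` and `h` are linearly dependent over `ℝ`. -/

section Wirtinger

variable {u v : ℂ → ℂ} {z : ℂ}

theorem wzbar_sub (hu : DifferentiableAt ℝ u z) (hv : DifferentiableAt ℝ v z) :
    wzbar (fun ζ => u ζ - v ζ) z = wzbar u z - wzbar v z := by
  simp only [wzbar, fderiv_fun_sub hu hv, sub_apply]
  ring

theorem wzbar_eq_zero_iff : wzbar u z = 0 ↔ fderiv ℝ u z I = I * fderiv ℝ u z 1 := by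
  unfold wzbar
  constructor <;> intro h
  · linear_combination -2 * I * h + fderiv ℝ u z I * I_mul_I
  · linear_combination I / 2 * h + fderiv ℝ u z 1 / 2 * I_mul_I

theorem differentiableAt_complex_iff_wzbar_eq_zero :
    DifferentiableAt ℂ u z ↔ DifferentiableAt ℝ u z ∧ wzbar u z = 0 := by
  rw [differentiableAt_complex_iff_differentiableAt_real, wzbar_eq_zero_iff, smul_eq_mul]

theorem wzbar_sub_of_differentiableAt_complex (hu : DifferentiableAt ℝ u z)
    (hv : DifferentiableAt ℂ v z) : wzbar (fun ζ => u ζ - v ζ) z = wzbar u z := by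
  obtain ⟨hv_real, hv_wzbar⟩ := differentiableAt_complex_iff_wzbar_eq_zero.mp hv
  rw [wzbar_sub hu hv_real, hv_wzbar, sub_zero]

end Wirtinger

theorem conj_mul_eq_mul_conj_iff {a b : ℂ} :
    starRingEnd ℂ a * b = a * starRingEnd ℂ b ↔ a.re * b.im = a.im * b.re := by
  simp only [Complex.ext_iff, mul_re, mul_im, conj_re, conj_im]
  constructor
  · rintro ⟨-, him⟩
    linarith
  · intro h
    constructor <;> linarith

theorem inteq_of_sub_holomorphic_general {U : Set ℂ} (hU : IsOpen U) {t h p w : ℂ → ℂ}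
    (hp : DifferentiableOn ℝ p U) (hint : INTEQ U t h p) (hw : DifferentiableOn ℂ w U)
    (hlin : ∀ z ∈ U, (w z).re * (h z).im = (w z).im * (h z).re) :
    INTEQ U t h (fun z => p z - w z) := by
  obtain ⟨ht_eq, hp_eq, hh_eq⟩ := hint
  refine ⟨ht_eq, fun z hz => ?_, fun z hz => ?_⟩
  · have hUz : U ∈ nhds z := hU.mem_nhds hz
    rw [wzbar_sub_of_differentiableAt_complex (hp.differentiableAt hUz) (hw.differentiableAt hUz)]
    exact hp_eq z hz
  · have hwh : starRingEnd ℂ (w z) * h z = w z * starRingEnd ℂ (h z) :=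
      conj_mul_eq_mul_conj_iff.mpr (hlin z hz)
    rw [← hh_eq z hz, map_sub, sub_mul, sub_mul, hwh, sub_sub_sub_cancel_right]

/-- If smooth `t, h, p` on an open `U ⊆ ℂ` satisfy the integrability equations, and
`w` is holomorphic on `U` with `Re(w)·Im(h) = Im(w)·Re(h)` on `U`, then `t, h, p − w`
also satisfy the integrability equations. -/
theorem inteq_of_sub_holomorphic (U : Set ℂ) (hU : IsOpen U) (t h p w : ℂ → ℂ)
    (ht : ContDiffOn ℝ (⊤ : ℕ∞) t U) (hh : ContDiffOn ℝ (⊤ : ℕ∞) h U) (hp : ContDiffOn ℝ (⊤ : ℕ∞) p U)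
    (hint : INTEQ U t h p)
    (hw : DifferentiableOn ℂ w U)
    (hlin : ∀ z ∈ U, (w z).re * (h z).im = (w z).im * (h z).re) :
    INTEQ U t h (fun z => p z - w z) :=
  inteq_of_sub_holomorphic_general hU (hp.differentiableOn (by simp)) hint hw hlin
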